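/- arXiv:1704.00749 — 4 statements merged into one kernel-verified Lean document; each statement's English description precedes it below -/
import Mathlib

section
/- Assume strict feasibility of the primal problem. Then for every ε > 0 there exist step sizes α, β > 0 and T ∈ ℕ such that the VC-LB iterates satisfy fes(q(z(t))) ≤ ε for all t ≥ T. -/
open Matrix

noncomputable section

/-- Euclidean norm of a vector in ℝ^{4N}, represented as four blocks of ℝ^N. -/
def enorm4 {N : ℕ} (w : Fin 4 → Fin N → ℝ) : ℝ :=
  Real.sqrt (∑ b, ∑ i, w b i ^ 2)

/-- sign(x) = 1 if x ≥ 0 and −1 if x < 0. -/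
def sgn (x : ℝ) : ℝ := if 0 ≤ x then 1 else -1

/-- The (linearized) voltage map v(q) = A q + d. -/
def volt {N : ℕ} (A : Matrix (Fin N) (Fin N) ℝ) (d : Fin N → ℝ) (q : Fin N → ℝ) :
    Fin N → ℝ :=
  A *ᵥ q + d

/-- q(z) = λ^min − λ^max + A⁻¹(μ^min − μ^max). -/
def qOf {N : ℕ} (A : Matrix (Fin N) (Fin N) ℝ) (z : Fin 4 → Fin N → ℝ) : Fin N → ℝ :=
  z 0 - z 1 + A⁻¹ *ᵥ (z 2 - z 3)

/-- ∇D(z) = (v^min − v(q(z)), v(q(z)) − v^max, q^min − q(z), q(z) − q^max). -/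
def gradD {N : ℕ} (A : Matrix (Fin N) (Fin N) ℝ) (d vmin vmax qmin qmax : Fin N → ℝ)
    (z : Fin 4 → Fin N → ℝ) : Fin 4 → Fin N → ℝ :=
  ![vmin - volt A d (qOf A z), volt A d (qOf A z) - vmax,
    qmin - qOf A z, qOf A z - qmax]

/-- V(z) = ‖z − ⌈z + ∇D(z)⌉₊‖. -/
def Vfun {N : ℕ} (A : Matrix (Fin N) (Fin N) ℝ) (d vmin vmax qmin qmax : Fin N → ℝ)
    (z : Fin 4 → Fin N → ℝ) : ℝ :=
  enorm4 (fun b i => z b i - max (z b i + gradD A d vmin vmax qmin qmax z b i) 0)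

/-- The Lagrangian dual function
D(z) = inf_q [ (1/2) qᵀAq + (λ^min)ᵀ(v^min − v(q)) + (λ^max)ᵀ(v(q) − v^max)
  + (μ^min)ᵀ(q^min − q) + (μ^max)ᵀ(q − q^max) ]. -/
def dualFun {N : ℕ} (A : Matrix (Fin N) (Fin N) ℝ) (d vmin vmax qmin qmax : Fin N → ℝ)
    (z : Fin 4 → Fin N → ℝ) : ℝ :=
  ⨅ q : Fin N → ℝ,
    ((1 / 2) * (q ⬝ᵥ A *ᵥ q) + (z 0) ⬝ᵥ (vmin - volt A d q)
      + (z 1) ⬝ᵥ (volt A d q - vmax) + (z 2) ⬝ᵥ (qmin - q) + (z 3) ⬝ᵥ (q - qmax))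

/-- fes(q) = Euclidean distance from (q, v(q)) to the box [q^min,q^max] × [v^min,v^max]. -/
def fes {N : ℕ} (A : Matrix (Fin N) (Fin N) ℝ) (d vmin vmax qmin qmax : Fin N → ℝ)
    (q : Fin N → ℝ) : ℝ :=
  sInf { r : ℝ | ∃ y1 y2 : Fin N → ℝ,
    (∀ i, qmin i ≤ y1 i ∧ y1 i ≤ qmax i) ∧ (∀ i, vmin i ≤ y2 i ∧ y2 i ≤ vmax i) ∧
    r = Real.sqrt ((∑ i, (q i - y1 i) ^ 2) + ∑ i, (volt A d q i - y2 i) ^ 2) }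

/-!
The dual function `D` is a concave quadratic with gradient `g`, and every coordinate of the
iteration moves in a direction of ascent before truncation at `0`. To first order a step gains
`g z ⬝ᵥ (z' - z)`, a sum of nonnegative terms. The second order term costs at most half the
gain of a gradient step of size `L⁻¹`, and at most `L β² / 2` in a sign step of size `β`, where `L`
bounds the curvature of `D`.

If the first order gain is `O(β²)`, each coordinate has either been truncated, and then pushes
outwards, or has `|g z i| = O(β)`; on a bounded set concavity then makes `z` maximal up to `O(β)`.
So `D (z t)` increases by a fixed amount until it is within `O(β)` of the supremum, and afterwards
it can never fall far below. Finally, a point of the orthant that is maximal up to `κ` has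
`g z i ≤ √(2 L κ)`, and `g` is the constraint violation of the associated primal point.
A Slater point bounds the superlevel sets of `D`, which is what keeps the iterates bounded.
-/

open Filter Topology

section Scalar

variable {g h z w β L R : ℝ}

lemma sq_max_add_sub_le (hz : 0 ≤ z) : (max (z + h) 0 - z) ^ 2 ≤ h * (max (z + h) 0 - z) := by
  rcases le_total 0 (z + h) with hzh | hzh
  · rw [max_eq_left hzh]
    exact le_of_eq (by ring)
  · rw [max_eq_right hzh]
    nlinarith

lemma mul_sq_gradStep_le (hL : 0 < L) (hz : 0 ≤ z) :
    L * (max (z + L⁻¹ * g) 0 - z) ^ 2 ≤ g * (max (z + L⁻¹ * g) 0 - z) := by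
  calc L * (max (z + L⁻¹ * g) 0 - z) ^ 2
      ≤ L * (L⁻¹ * g * (max (z + L⁻¹ * g) 0 - z)) := by gcongr; exact sq_max_add_sub_le hz
    _ = g * (max (z + L⁻¹ * g) 0 - z) := by field_simp

lemma sgn_sq (g : ℝ) : sgn g ^ 2 = 1 := by
  unfold sgn
  split_ifs <;> norm_num

lemma mul_sgn (g : ℝ) : g * sgn g = |g| := by
  unfold sgn
  split_ifs with hg
  · rw [mul_one, abs_of_nonneg hg]
  · rw [abs_of_neg (not_le.1 hg)]
    ring

lemma abs_mul_sgn (g : ℝ) : |g| * sgn g = g := by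
  rw [← mul_sgn, mul_assoc, ← sq, sgn_sq, mul_one]

lemma mul_signStep_nonneg (hβ : 0 < β) (hz : 0 ≤ z) :
    0 ≤ g * (max (z + β * sgn g) 0 - z) := by
  have hδ : 0 ≤ β * (sgn g * (max (z + β * sgn g) 0 - z)) := by
    rw [← mul_assoc]
    exact (sq_nonneg _).trans (sq_max_add_sub_le hz)
  calc 0 ≤ |g| * (sgn g * (max (z + β * sgn g) 0 - z)) :=
        mul_nonneg (abs_nonneg g) (nonneg_of_mul_nonneg_right hδ hβ)
    _ = g * (max (z + β * sgn g) 0 - z) := by rw [← mul_assoc, abs_mul_sgn]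

lemma sq_signStep_le (hz : 0 ≤ z) : (max (z + β * sgn g) 0 - z) ^ 2 ≤ β ^ 2 := by
  have hδ := sq_max_add_sub_le (h := β * sgn g) hz
  have hsq : (β * sgn g) ^ 2 = β ^ 2 := by rw [mul_pow, sgn_sq, mul_one]
  nlinarith [sq_nonneg (max (z + β * sgn g) 0 - z - β * sgn g)]

/- A truncated coordinate has `g ≤ 0` and moves by `-z`, so its slope towards `w` is at most its
gain; an untruncated one moves by `h`. -/
lemma mul_sub_le_max_of_mul_step_le {m q : ℝ} (hz : z ∈ Set.Icc 0 R) (hw : w ∈ Set.Icc 0 R)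
    (hgh : 0 ≤ g * h) (hm : g * (max (z + h) 0 - z) ≤ m) (hq : g * h ≤ m → |g| ≤ q) :
    g * (w - z) ≤ max (q * R) m := by
  rcases le_or_gt 0 (z + h) with hzh | hzh
  · rw [max_eq_left hzh, add_sub_cancel_left] at hm
    have hwz : |w - z| ≤ R := abs_le.2 ⟨by linarith [hz.2, hw.1], by linarith [hz.1, hw.2]⟩
    refine le_max_of_le_left ?_
    calc g * (w - z) ≤ |g| * |w - z| := (le_abs_self _).trans_eq (abs_mul _ _)
      _ ≤ q * R := mul_le_mul (hq hm) hwz (abs_nonneg _) ((abs_nonneg g).trans (hq hm))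
  · rw [max_eq_right hzh.le] at hm
    have hg : g ≤ 0 := nonpos_of_mul_nonneg_left hgh (by linarith [hz.1])
    refine le_max_of_le_right ?_
    linarith [mul_nonpos_of_nonpos_of_nonneg hg hw.1]

lemma gradStep_slope_le {m : ℝ} (hL : 0 < L) (hz : z ∈ Set.Icc 0 R) (hw : w ∈ Set.Icc 0 R)
    (hm : g * (max (z + L⁻¹ * g) 0 - z) ≤ m) : g * (w - z) ≤ max (√(L * m) * R) m := by
  have hgh : g * (L⁻¹ * g) = g ^ 2 / L := by field_simp
  refine mul_sub_le_max_of_mul_step_le hz hw (by rw [hgh]; positivity) hm fun h => ?_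
  rw [hgh, div_le_iff₀' hL] at h
  exact Real.abs_le_sqrt h

lemma signStep_slope_le {m : ℝ} (hβ : 0 < β) (hz : z ∈ Set.Icc 0 R) (hw : w ∈ Set.Icc 0 R)
    (hm : g * (max (z + β * sgn g) 0 - z) ≤ m) : g * (w - z) ≤ max (m / β * R) m := by
  have hgh : g * (β * sgn g) = |g| * β := by rw [← mul_sgn]; ring
  refine mul_sub_le_max_of_mul_step_le hz hw (by rw [hgh]; positivity) hm fun h => ?_
  rwa [hgh, ← le_div_iff₀ hβ] at h

end Scalar

lemma min_add_mul_le_of_drop_of_gain {a : ℕ → ℝ} {c l m : ℝ} (h0 : l ≤ a 0) (hlm : l ≤ m - c)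
    (hc : 0 ≤ c) (hdrop : ∀ t, a t - c ≤ a (t + 1))
    (hgain : ∀ t, l ≤ a t → a t < m → a t + c ≤ a (t + 1)) (t : ℕ) :
    min (a 0 + t * c) (m - c) ≤ a t := by
  induction t with
  | zero => simp
  | succ t ih =>
    have hl : l ≤ a t := (le_min (by nlinarith [t.cast_nonneg (α := ℝ)]) hlm).trans ih
    rcases lt_or_ge (a t) m with hlt | hge
    · have hstep := hgain t hl hlt
      rcases min_le_iff.1 ih with h | h
      · exact min_le_of_left_le (by push_cast; linarith)
      · exact min_le_of_right_le (by linarith)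
    · exact min_le_of_right_le (by linarith [hdrop t])

/-- One step of ascent over the nonnegative orthant from `z` to `z'`: each coordinate makes either
a gradient step of size `α` or a sign step of size `β`, truncated at `0`. -/
def IsProjectedAscentStep {ι : Type*} (α β : ℝ) (g z z' : ι → ℝ) : Prop :=
  ∀ i, z' i = max (z i + α * g i) 0 ∨ z' i = max (z i + β * sgn (g i)) 0

namespace IsProjectedAscentStep

variable {ι : Type*} {α β L R : ℝ} {g z z' w : ι → ℝ}

lemma nonneg (h : IsProjectedAscentStep α β g z z') : 0 ≤ z' := fun i => by
  rcases h i with hi | hi <;> exact hi ▸ le_max_right _ _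

lemma nonneg_of_forall_step {γ : (ι → ℝ) → ι → ℝ} {ζ : ℕ → ι → ℝ} (h0 : 0 ≤ ζ 0)
    (h : ∀ t, IsProjectedAscentStep α β (γ (ζ t)) (ζ t) (ζ (t + 1))) (t : ℕ) : 0 ≤ ζ t := by
  cases t with
  | zero => exact h0
  | succ t => exact (h t).nonneg

lemma mul_sub_nonneg (h : IsProjectedAscentStep L⁻¹ β g z z') (hL : 0 < L) (hβ : 0 < β)
    (hz : 0 ≤ z) (i : ι) : 0 ≤ g i * (z' i - z i) := by
  rcases h i with hi | hi <;> rw [hi]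
  · exact (by positivity : 0 ≤ L * _).trans (mul_sq_gradStep_le hL (hz i))
  · exact mul_signStep_nonneg hβ (hz i)

lemma mul_sub_sq_le (h : IsProjectedAscentStep L⁻¹ β g z z') (hL : 0 < L) (hβ : 0 < β)
    (hz : 0 ≤ z) (i : ι) : L * (z' i - z i) ^ 2 ≤ g i * (z' i - z i) + L * β ^ 2 := by
  have hgain := h.mul_sub_nonneg hL hβ hz i
  rcases h i with hi | hi <;> rw [hi] at hgain ⊢
  · exact (mul_sq_gradStep_le hL (hz i)).trans (le_add_of_nonneg_right (by positivity))
  · have := mul_le_mul_of_nonneg_left (sq_signStep_le (g := g i) (β := β) (hz i)) hL.le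
    linarith

lemma slope_le {n : ℝ} (h : IsProjectedAscentStep L⁻¹ β g z z') (hL : 0 < L) (hβ : 0 < β)
    (hn : 1 ≤ n) {i : ι} (hz : z i ∈ Set.Icc 0 R) (hw : w i ∈ Set.Icc 0 R)
    (hgain : g i * (z' i - z i) ≤ 2 * n * L * β ^ 2) :
    g i * (w i - z i) ≤ 2 * n * L * β * (R + β) := by
  have hR : 0 ≤ R := hz.1.trans hz.2
  have hmax : max (2 * n * L * β * R) (2 * n * L * β ^ 2) ≤ 2 * n * L * β * (R + β) := by
    have : 0 ≤ 2 * n * L * β * R := by positivity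
    have : 0 ≤ 2 * n * L * β * β := by positivity
    exact max_le (by linarith) (by linarith)
  rcases h i with hi | hi <;> rw [hi] at hgain
  · refine (gradStep_slope_le hL hz hw hgain).trans (le_trans ?_ hmax)
    gcongr
    refine Real.sqrt_le_iff.2 ⟨by positivity, ?_⟩
    calc L * (2 * n * L * β ^ 2) = 2 * n * 1 * (L * β) ^ 2 := by ring
      _ ≤ 2 * n * (2 * n) * (L * β) ^ 2 := by gcongr; linarith
      _ = (2 * n * L * β) ^ 2 := by ring
  · have hdiv : 2 * n * L * β ^ 2 / β = 2 * n * L * β := by field_simp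
    have := signStep_slope_le hβ hz hw hgain
    rw [hdiv] at this
    exact this.trans hmax

end IsProjectedAscentStep

lemma exists_pos_step_loss_lt (n L R : ℝ) {δ : ℝ} (hδ : 0 < δ) :
    ∃ β > 0, 2 * n ^ 2 * L * β * (R + β) + n * L * β ^ 2 / 2 < δ := by
  have htendsto : Tendsto (fun β => 2 * n ^ 2 * L * β * (R + β) + n * L * β ^ 2 / 2)
      (𝓝[>] 0) (𝓝 0) :=
    (Continuous.tendsto' (by fun_prop) 0 0 (by simp)).mono_left nhdsWithin_le_nhds
  obtain ⟨β, hβδ, hβ⟩ :=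
    ((htendsto.eventually_lt_const hδ).and self_mem_nhdsWithin).exists
  exact ⟨β, hβ, hβδ⟩

/-- `D` is concave with supergradient `g`, and lies above its linearizations up to a quadratic
error with constant `L`. Both properties are stated as inequalities, without derivatives. -/
structure IsSmoothConcave {ι : Type*} [Fintype ι] (D : (ι → ℝ) → ℝ) (g : (ι → ℝ) → ι → ℝ)
    (L : ℝ) : Prop where
  le_linearization : ∀ z w, D w ≤ D z + g z ⬝ᵥ (w - z)
  linearization_sub_le : ∀ z w, D z + g z ⬝ᵥ (w - z) - L / 2 * ((w - z) ⬝ᵥ (w - z)) ≤ D w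

namespace IsSmoothConcave

variable {ι : Type*} [Fintype ι] {D : (ι → ℝ) → ℝ} {g : (ι → ℝ) → ι → ℝ} {L β R : ℝ}
  {z z' w : ι → ℝ}

lemma half_gain_le (hD : IsSmoothConcave D g L)
    (h : IsProjectedAscentStep L⁻¹ β (g z) z z') (hL : 0 < L) (hβ : 0 < β) (hz : 0 ≤ z) :
    D z + g z ⬝ᵥ (z' - z) / 2 - Fintype.card ι * L * β ^ 2 / 2 ≤ D z' := by
  have hsq : L * ((z' - z) ⬝ᵥ (z' - z)) ≤ g z ⬝ᵥ (z' - z) + Fintype.card ι * (L * β ^ 2) := by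
    calc L * ((z' - z) ⬝ᵥ (z' - z)) = ∑ i, L * (z' i - z i) ^ 2 := by
          simp only [dotProduct, Pi.sub_apply, Finset.mul_sum, sq]
      _ ≤ ∑ i, (g z i * (z' i - z i) + L * β ^ 2) :=
          Finset.sum_le_sum fun i _ => h.mul_sub_sq_le hL hβ hz i
      _ = g z ⬝ᵥ (z' - z) + Fintype.card ι * (L * β ^ 2) := by
          simp only [dotProduct, Pi.sub_apply, Finset.sum_add_distrib, Finset.sum_const,
            Finset.card_univ, nsmul_eq_mul]
  linarith [hD.linearization_sub_le z z']

lemma sub_le_of_isProjectedAscentStep (hD : IsSmoothConcave D g L)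
    (h : IsProjectedAscentStep L⁻¹ β (g z) z z') (hL : 0 < L) (hβ : 0 < β) (hz : 0 ≤ z) :
    D z - Fintype.card ι * L * β ^ 2 / 2 ≤ D z' := by
  have hgain : 0 ≤ g z ⬝ᵥ (z' - z) :=
    Finset.sum_nonneg fun i _ => h.mul_sub_nonneg hL hβ hz i
  linarith [hD.half_gain_le h hL hβ hz]

lemma add_le_of_isProjectedAscentStep (hD : IsSmoothConcave D g L)
    (h : IsProjectedAscentStep L⁻¹ β (g z) z z') (hL : 0 < L) (hβ : 0 < β)
    (hz : ∀ i, z i ∈ Set.Icc 0 R) (hw : ∀ i, w i ∈ Set.Icc 0 R)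
    (hzw : D z + 2 * Fintype.card ι ^ 2 * L * β * (R + β) < D w) :
    D z + Fintype.card ι * L * β ^ 2 / 2 ≤ D z' := by
  by_contra! hlt
  have hz0 : 0 ≤ z := fun i => (hz i).1
  have hgain : g z ⬝ᵥ (z' - z) ≤ 2 * Fintype.card ι * L * β ^ 2 := by
    linarith [hD.half_gain_le h hL hβ hz0]
  have hslope (i : ι) : g z i * (w i - z i) ≤ 2 * Fintype.card ι * L * β * (R + β) := by
    have hn : (1 : ℝ) ≤ Fintype.card ι := by exact_mod_cast Fintype.card_pos_iff.2 ⟨i⟩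
    refine h.slope_le hL hβ hn (hz i) (hw i) (le_trans ?_ hgain)
    exact Finset.single_le_sum (f := fun j => g z j * (z' j - z j))
      (fun j _ => h.mul_sub_nonneg hL hβ hz0 j) (Finset.mem_univ i)
  have hsum : g z ⬝ᵥ (w - z) ≤ Fintype.card ι * (2 * Fintype.card ι * L * β * (R + β)) := by
    simpa only [dotProduct, Pi.sub_apply, Finset.card_univ, nsmul_eq_mul] using
      Finset.sum_le_card_nsmul Finset.univ _ _ fun i _ => hslope i
  linarith [hD.le_linearization z w]

lemma sq_gradient_le_of_near_max (hD : IsSmoothConcave D g L) (hL : 0 < L) (hz : 0 ≤ z) {κ : ℝ}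
    (hmax : ∀ w, 0 ≤ w → D w ≤ D z + κ) {i : ι} (hi : 0 ≤ g z i) :
    g z i ^ 2 ≤ 2 * L * κ := by
  classical
  have hw : 0 ≤ z + Pi.single i (g z i / L) :=
    add_nonneg hz (Pi.single_nonneg.2 (div_nonneg hi hL.le))
  have hlow := hD.linearization_sub_le z (z + Pi.single i (g z i / L))
  simp only [add_sub_cancel_left, dotProduct_single, Pi.single_eq_same] at hlow
  have hgain : g z i * (g z i / L) - L / 2 * (g z i / L * (g z i / L)) = g z i ^ 2 / (2 * L) := by
    field_simp
    ring
  rw [← div_le_iff₀' (by positivity)]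
  linarith [hmax _ hw]

lemma exists_forall_le (hD : IsSmoothConcave D g L) {z₀ : ι → ℝ} (hz₀ : ∀ i, z₀ i ∈ Set.Icc 0 R)
    (hR : ∀ w, 0 ≤ w → D z₀ ≤ D w → ∀ i, w i ≤ R) : ∃ M, ∀ w, 0 ≤ w → D w ≤ M := by
  refine ⟨D z₀ + ∑ i, |g z₀ i| * R, fun w hw => ?_⟩
  by_cases hwD : D z₀ ≤ D w
  · refine (hD.le_linearization z₀ w).trans
      (add_le_add_right (Finset.sum_le_sum fun i _ => ?_) _)
    have hwi : |(w - z₀) i| ≤ R :=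
      abs_sub_le_of_nonneg_of_le (hw i) (hR w hw hwD i) (hz₀ i).1 (hz₀ i).2
    calc g z₀ i * (w - z₀) i ≤ |g z₀ i| * |(w - z₀) i| := (le_abs_self _).trans_eq (abs_mul _ _)
      _ ≤ |g z₀ i| * R := by gcongr
  · have : 0 ≤ ∑ i, |g z₀ i| * R :=
      Finset.sum_nonneg fun i _ => mul_nonneg (abs_nonneg _) ((hz₀ i).1.trans (hz₀ i).2)
    linarith

lemma exists_eventually_near_max [Nonempty ι] (hD : IsSmoothConcave D g L) (hL : 0 < L) {z₀ : ι → ℝ}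
    (hz₀ : 0 ≤ z₀) (hbdd : Bornology.IsBounded {w | 0 ≤ w ∧ D z₀ - 1 ≤ D w}) {κ : ℝ} (hκ : 0 < κ) :
    ∃ β > 0, ∃ T : ℕ, ∀ z : ℕ → ι → ℝ, z 0 = z₀ →
      (∀ t, IsProjectedAscentStep L⁻¹ β (g (z t)) (z t) (z (t + 1))) →
      ∀ t ≥ T, ∀ w, 0 ≤ w → D w ≤ D (z t) + κ := by
  obtain ⟨R, hR⟩ := hbdd.exists_norm_le
  have hbox (w : ι → ℝ) (hw : 0 ≤ w) (hwD : D z₀ - 1 ≤ D w) (i : ι) : w i ∈ Set.Icc 0 R :=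
    ⟨hw i, (le_abs_self _).trans ((norm_le_pi_norm w i).trans (hR w ⟨hw, hwD⟩))⟩
  obtain ⟨M, hM⟩ := hD.exists_forall_le (hbox z₀ hz₀ (by linarith))
    fun w hw hwD i => (hbox w hw (by linarith) i).2
  obtain ⟨β, hβ, hloss⟩ := exists_pos_step_loss_lt (Fintype.card ι) L R (lt_min one_pos hκ)
  rw [lt_min_iff] at hloss
  have hc : 0 < Fintype.card ι * L * β ^ 2 / 2 := by positivity
  obtain ⟨T, hT⟩ := exists_nat_gt ((M - D z₀) / (Fintype.card ι * L * β ^ 2 / 2))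
  rw [div_lt_iff₀ hc] at hT
  refine ⟨β, hβ, T, fun z hz0 hstep t ht => ?_⟩
  have hnonneg := IsProjectedAscentStep.nonneg_of_forall_step (hz0 ▸ hz₀) hstep
  suffices hnear : ∀ w, 0 ≤ w → D z₀ ≤ D w → D w ≤ D (z t) + κ by
    intro w hw
    rcases le_total (D z₀) (D w) with hwD | hwD
    · exact hnear w hw hwD
    · exact hwD.trans (hnear z₀ hz₀ le_rfl)
  intro w hw hwD
  have hmin := min_add_mul_le_of_drop_of_gain (a := fun t => D (z t)) (l := D z₀ - 1)
    (m := D w - 2 * Fintype.card ι ^ 2 * L * β * (R + β)) (by simp [hz0]) (by linarith) hc.le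
    (fun t => hD.sub_le_of_isProjectedAscentStep (hstep t) hL hβ (hnonneg t))
    (fun t hlo hlt => hD.add_le_of_isProjectedAscentStep (hstep t) hL hβ
      (hbox _ (hnonneg t) hlo) (hbox w hw (by linarith)) (by linarith)) t
  rw [hz0] at hmin
  have htT : T * (Fintype.card ι * L * β ^ 2 / 2) ≤ t * (Fintype.card ι * L * β ^ 2 / 2) := by
    gcongr
  rcases min_le_iff.1 hmin with h | h
  · linarith [hM w hw]
  · linarith

theorem exists_eventually_gradient_le [Nonempty ι] (hD : IsSmoothConcave D g L) (hL : 0 < L)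
    {z₀ : ι → ℝ} (hz₀ : 0 ≤ z₀) (hbdd : Bornology.IsBounded {w | 0 ≤ w ∧ D z₀ - 1 ≤ D w})
    {η : ℝ} (hη : 0 < η) :
    ∃ β > 0, ∃ T : ℕ, ∀ z : ℕ → ι → ℝ, z 0 = z₀ →
      (∀ t, IsProjectedAscentStep L⁻¹ β (g (z t)) (z t) (z (t + 1))) →
      ∀ t ≥ T, ∀ i, g (z t) i ≤ η := by
  obtain ⟨β, hβ, T, hT⟩ := hD.exists_eventually_near_max hL hz₀ hbdd
    (κ := η ^ 2 / (2 * L)) (by positivity)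
  refine ⟨β, hβ, T, fun z hz0 hstep t ht i => ?_⟩
  have hnonneg : 0 ≤ z t := IsProjectedAscentStep.nonneg_of_forall_step (hz0 ▸ hz₀) hstep t
  by_contra! hlt
  have hsq := hD.sq_gradient_le_of_near_max hL hnonneg (hT z hz0 hstep t ht) (hη.trans hlt).le
  rw [mul_div_cancel₀ _ (by positivity)] at hsq
  exact hlt.not_ge (le_of_sq_le_sq hsq hη.le)

end IsSmoothConcave

lemma dotProduct_mulVec_le_opNorm_mul {m : Type*} [Fintype m] [DecidableEq m]
    (H : Matrix m m ℝ) (u : m → ℝ) : u ⬝ᵥ H *ᵥ u ≤ ‖toEuclideanCLM (𝕜 := ℝ) H‖ * (u ⬝ᵥ u) := by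
  have hinner (x : m → ℝ) : u ⬝ᵥ x = inner ℝ (WithLp.toLp 2 u) (WithLp.toLp 2 x) := by
    simp [EuclideanSpace.inner_toLp_toLp, dotProduct_comm]
  rw [hinner, hinner, real_inner_self_eq_norm_sq, ← toEuclideanCLM_toLp (𝕜 := ℝ)]
  calc _ ≤ ‖WithLp.toLp 2 u‖ * ‖toEuclideanCLM (𝕜 := ℝ) H (WithLp.toLp 2 u)‖ :=
        real_inner_le_norm _ _
    _ ≤ ‖WithLp.toLp 2 u‖ * (‖toEuclideanCLM (𝕜 := ℝ) H‖ * ‖WithLp.toLp 2 u‖) := by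
        gcongr
        exact ContinuousLinearMap.le_opNorm _ _
    _ = ‖toEuclideanCLM (𝕜 := ℝ) H‖ * ‖WithLp.toLp 2 u‖ ^ 2 := by ring

lemma dotProduct_mulVec_comm_of_isSymm {n : Type*} [Fintype n] {A : Matrix n n ℝ}
    (hA : A.IsSymm) (x y : n → ℝ) : x ⬝ᵥ A *ᵥ y = y ⬝ᵥ A *ᵥ x := by
  rw [dotProduct_mulVec, ← mulVec_transpose, hA, dotProduct_comm]

/-- The problem of minimizing `(1/2) qᵀ A q` subject to `con q + offset ≤ 0`, with `A` positive
definite. Its dual is maximized over the nonnegative orthant by VC-LB. -/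
structure QuadraticProgram (m n : Type*) where
  hessian : Matrix n n ℝ
  posDef : hessian.PosDef
  con : Matrix m n ℝ
  offset : m → ℝ

namespace QuadraticProgram

lemma hessian_isSymm {m n : Type*} (P : QuadraticProgram m n) : P.hessian.IsSymm :=
  (conjTranspose_eq_transpose_of_trivial P.hessian).symm.trans P.posDef.isHermitian

/-- The constraint values at the point `q`, which is feasible when they are all nonpositive. -/
def residual {m n : Type*} [Fintype n] (P : QuadraticProgram m n) (q : n → ℝ) : m → ℝ :=
  P.con *ᵥ q + P.offset

variable {m n : Type*} [Fintype m] [Fintype n] (P : QuadraticProgram m n)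

/-- The Lagrangian of the program at the primal point `q` and the multipliers `z`. -/
def lagrangian (q : n → ℝ) (z : m → ℝ) : ℝ :=
  1 / 2 * (q ⬝ᵥ P.hessian *ᵥ q) + z ⬝ᵥ P.residual q

lemma mul_neg_residual_le {q : n → ℝ} (hq : P.residual q ≤ 0) {z : m → ℝ} (hz : 0 ≤ z) (i : m) :
    z i * -P.residual q i ≤ 1 / 2 * (q ⬝ᵥ P.hessian *ᵥ q) - P.lagrangian q z := by
  have hi : z i * -P.residual q i ≤ ∑ j, z j * -P.residual q j :=
    Finset.single_le_sum (f := fun j => z j * -P.residual q j)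
      (fun j _ => mul_nonneg (hz j) (neg_nonneg.2 (hq j))) (Finset.mem_univ i)
  simpa [lagrangian, dotProduct] using hi

variable [DecidableEq n]

/-- The primal point minimizing the Lagrangian for fixed multipliers. -/
def argmin (z : m → ℝ) : n → ℝ := -(P.hessian⁻¹ *ᵥ P.conᵀ *ᵥ z)

/-- The Lagrangian dual function, as the value of the Lagrangian at its minimizer. -/
def dual (z : m → ℝ) : ℝ := P.lagrangian (P.argmin z) z

lemma argmin_sub (w z : m → ℝ) : P.argmin (w - z) = P.argmin w - P.argmin z := by
  simp only [argmin, mulVec_sub, neg_sub']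

lemma hessian_mulVec_argmin (z : m → ℝ) : P.hessian *ᵥ P.argmin z = -(P.conᵀ *ᵥ z) := by
  have hdet : IsUnit P.hessian.det := P.posDef.det_pos.ne'.isUnit
  rw [argmin, mulVec_neg, mulVec_mulVec, mul_nonsing_inv _ hdet, one_mulVec]

lemma lagrangian_eq_dual_add (q : n → ℝ) (z : m → ℝ) :
    P.lagrangian q z = P.dual z +
      1 / 2 * ((q - P.argmin z) ⬝ᵥ P.hessian *ᵥ (q - P.argmin z)) := by
  have hcon (x : n → ℝ) : z ⬝ᵥ P.con *ᵥ x = -(x ⬝ᵥ P.hessian *ᵥ P.argmin z) := by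
    rw [hessian_mulVec_argmin, dotProduct_neg, neg_neg, mulVec_transpose, dotProduct_mulVec,
      dotProduct_comm]
  simp only [dual, lagrangian, residual, dotProduct_add, hcon, mulVec_sub, dotProduct_sub,
    sub_dotProduct]
  rw [dotProduct_mulVec_comm_of_isSymm P.hessian_isSymm (P.argmin z) q]
  ring

lemma dual_le_lagrangian (q : n → ℝ) (z : m → ℝ) : P.dual z ≤ P.lagrangian q z := by
  have hnonneg : 0 ≤ (q - P.argmin z) ⬝ᵥ P.hessian *ᵥ (q - P.argmin z) := by
    simpa using P.posDef.posSemidef.dotProduct_mulVec_nonneg (q - P.argmin z)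
  linarith [P.lagrangian_eq_dual_add q z]

lemma lagrangian_argmin (z w : m → ℝ) :
    P.lagrangian (P.argmin z) w = P.dual z + P.residual (P.argmin z) ⬝ᵥ (w - z) := by
  rw [dual, lagrangian, lagrangian, dotProduct_sub, dotProduct_comm w, dotProduct_comm z]
  ring

lemma argmin_dotProduct_hessian (u : m → ℝ) :
    P.argmin u ⬝ᵥ P.hessian *ᵥ P.argmin u =
      u ⬝ᵥ (P.con * P.hessian⁻¹ * P.conᵀ) *ᵥ u := by
  rw [hessian_mulVec_argmin, argmin, neg_dotProduct_neg, ← mulVec_mulVec, ← mulVec_mulVec,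
    dotProduct_mulVec u, ← mulVec_transpose, dotProduct_comm]

lemma exists_isSmoothConcave_dual :
    ∃ L > 0, IsSmoothConcave P.dual (fun z => P.residual (P.argmin z)) L := by
  classical
  let H := P.con * P.hessian⁻¹ * P.conᵀ
  refine ⟨‖toEuclideanCLM (𝕜 := ℝ) H‖ + 1, by positivity, fun z w => ?_, fun z w => ?_⟩
  · exact (P.dual_le_lagrangian _ w).trans_eq (P.lagrangian_argmin z w)
  · have hquad : (w - z) ⬝ᵥ H *ᵥ (w - z) ≤
        (‖toEuclideanCLM (𝕜 := ℝ) H‖ + 1) * ((w - z) ⬝ᵥ (w - z)) :=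
      (dotProduct_mulVec_le_opNorm_mul H _).trans
        (mul_le_mul_of_nonneg_right (by linarith) (Finset.sum_nonneg fun _ _ => mul_self_nonneg _))
    have hdual := P.lagrangian_eq_dual_add (P.argmin z) w
    rw [lagrangian_argmin, ← argmin_sub, argmin_dotProduct_hessian, ← neg_sub w z, mulVec_neg,
      neg_dotProduct_neg] at hdual
    linarith

lemma isBounded_superlevel_dual {q : n → ℝ} (hq : ∀ i, P.residual q i < 0) (c : ℝ) :
    Bornology.IsBounded {z | 0 ≤ z ∧ c ≤ P.dual z} := by
  let bound : m → ℝ := fun i => (1 / 2 * (q ⬝ᵥ P.hessian *ᵥ q) - c) / -P.residual q i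
  refine (Metric.isBounded_Icc 0 bound).subset fun z ⟨hz, hc⟩ => ⟨hz, fun i => ?_⟩
  rw [le_div_iff₀ (neg_pos.2 (hq i))]
  linarith [P.mul_neg_residual_le (fun j => (hq j).le) hz i, P.dual_le_lagrangian q z]

theorem exists_eventually_residual_le [Nonempty m] {q : n → ℝ} (hq : ∀ i, P.residual q i < 0)
    {η : ℝ} (hη : 0 < η) :
    ∃ α > 0, ∃ β > 0, ∃ T : ℕ, ∀ z : ℕ → m → ℝ, z 0 = 0 →
      (∀ t, IsProjectedAscentStep α β (P.residual (P.argmin (z t))) (z t) (z (t + 1))) →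
      ∀ t ≥ T, ∀ i, P.residual (P.argmin (z t)) i ≤ η := by
  obtain ⟨L, hL, hD⟩ := P.exists_isSmoothConcave_dual
  exact ⟨L⁻¹, inv_pos.2 hL,
    hD.exists_eventually_gradient_le hL le_rfl (P.isBounded_superlevel_dual hq _) hη⟩

end QuadraticProgram

lemma exists_mem_Icc_sq_sub_le {x lo hi η : ℝ} (hlohi : lo ≤ hi) (hη : 0 ≤ η)
    (hx : x ∈ Set.Icc (lo - η) (hi + η)) : ∃ y ∈ Set.Icc lo hi, (x - y) ^ 2 ≤ η ^ 2 := by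
  refine ⟨max lo (min x hi), ⟨le_max_left _ _, max_le hlohi (min_le_right _ _)⟩,
    sq_le_sq' ?_ ?_⟩
  · have : max lo (min x hi) ≤ x + η :=
      max_le (by linarith [hx.1]) ((min_le_left _ _).trans (by linarith))
    linarith
  · have : x - η ≤ max lo (min x hi) :=
      le_max_of_le_right (le_min (by linarith) (by linarith [hx.2]))
    linarith

section VoltageControl

variable {N : ℕ} {A : Matrix (Fin N) (Fin N) ℝ} {d vmin vmax qmin qmax q : Fin N → ℝ} {η : ℝ}

lemma fes_le (hv : ∀ i, vmin i ≤ vmax i) (hq : ∀ i, qmin i ≤ qmax i) (hη : 0 ≤ η)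
    (hvη : ∀ i, volt A d q i ∈ Set.Icc (vmin i - η) (vmax i + η))
    (hqη : ∀ i, q i ∈ Set.Icc (qmin i - η) (qmax i + η)) :
    fes A d vmin vmax qmin qmax q ≤ √(2 * N) * η := by
  choose y₁ hy₁ hqy₁ using fun i => exists_mem_Icc_sq_sub_le (hq i) hη (hqη i)
  choose y₂ hy₂ hvy₂ using fun i => exists_mem_Icc_sq_sub_le (hv i) hη (hvη i)
  have hsum₁ := Finset.sum_le_card_nsmul Finset.univ _ _ fun i _ => hqy₁ i
  have hsum₂ := Finset.sum_le_card_nsmul Finset.univ _ _ fun i _ => hvy₂ i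
  rw [Finset.card_univ, Fintype.card_fin, nsmul_eq_mul] at hsum₁ hsum₂
  calc fes A d vmin vmax qmin qmax q
      ≤ √((∑ i, (q i - y₁ i) ^ 2) + ∑ i, (volt A d q i - y₂ i) ^ 2) :=
        csInf_le ⟨0, by rintro r ⟨_, _, -, -, rfl⟩; exact Real.sqrt_nonneg _⟩
          ⟨y₁, y₂, hy₁, hy₂, rfl⟩
    _ ≤ √(2 * N * η ^ 2) := Real.sqrt_le_sqrt (by linarith)
    _ = √(2 * N) * η := by rw [Real.sqrt_mul (by positivity), Real.sqrt_sq hη]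

/-- The primal problem as a quadratic program. The constraint `(b, i)` is the `i`-th bound of the
`b`-th kind, in the order `v^min`, `v^max`, `q^min`, `q^max`. -/
def voltageProgram (hA : A.PosDef) (d vmin vmax qmin qmax : Fin N → ℝ) :
    QuadraticProgram (Fin 4 × Fin N) (Fin N) where
  hessian := A
  posDef := hA
  con := Matrix.of fun x => (![-A, A, -1, 1] : Fin 4 → Matrix (Fin N) (Fin N) ℝ) x.1 x.2
  offset := Function.uncurry ![vmin - d, d - vmax, qmin, -qmax]

lemma voltageProgram_residual (hA : A.PosDef) (d vmin vmax qmin qmax q : Fin N → ℝ) :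
    (voltageProgram hA d vmin vmax qmin qmax).residual q =
      Function.uncurry ![vmin - volt A d q, volt A d q - vmax, qmin - q, q - qmax] := by
  ext ⟨b, i⟩
  match b with
  | 0 =>
    change ((-A) *ᵥ q) i + (vmin i - d i) = vmin i - ((A *ᵥ q) i + d i)
    rw [neg_mulVec, Pi.neg_apply]
    ring
  | 1 =>
    change (A *ᵥ q) i + (d i - vmax i) = (A *ᵥ q) i + d i - vmax i
    ring
  | 2 =>
    change ((-1 : Matrix (Fin N) (Fin N) ℝ) *ᵥ q) i + qmin i = qmin i - q i
    rw [neg_mulVec, one_mulVec, Pi.neg_apply]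
    ring
  | 3 =>
    change ((1 : Matrix (Fin N) (Fin N) ℝ) *ᵥ q) i + -qmax i = q i - qmax i
    rw [one_mulVec]
    ring

lemma voltageProgram_residual_neg (hA : A.PosDef) (hq : ∀ i, qmin i < q i ∧ q i < qmax i)
    (hv : ∀ i, vmin i < volt A d q i ∧ volt A d q i < vmax i) (x : Fin 4 × Fin N) :
    (voltageProgram hA d vmin vmax qmin qmax).residual q x < 0 := by
  rw [voltageProgram_residual]
  match x with
  | (0, i) => exact sub_neg.2 (hv i).1
  | (1, i) => exact sub_neg.2 (hv i).2
  | (2, i) => exact sub_neg.2 (hq i).1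
  | (3, i) => exact sub_neg.2 (hq i).2

lemma voltageProgram_argmin (hA : A.PosDef) (d vmin vmax qmin qmax : Fin N → ℝ)
    (z : Fin 4 → Fin N → ℝ) :
    (voltageProgram hA d vmin vmax qmin qmax).argmin (Function.uncurry z) = qOf A z := by
  have hdet : IsUnit A.det := hA.det_pos.ne'.isUnit
  have hsymm : Aᵀ = A := (voltageProgram hA d vmin vmax qmin qmax).hessian_isSymm
  have hcon : (voltageProgram hA d vmin vmax qmin qmax).conᵀ *ᵥ Function.uncurry z =
      -(A *ᵥ z 0) + A *ᵥ z 1 - z 2 + z 3 := by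
    calc _ = ∑ b, ((![-A, A, -1, 1] : Fin 4 → Matrix (Fin N) (Fin N) ℝ) b)ᵀ *ᵥ z b := by
          ext i
          simp only [mulVec, dotProduct, Fintype.sum_prod_type, Finset.sum_apply]
          rfl
      _ = (-A)ᵀ *ᵥ z 0 + Aᵀ *ᵥ z 1 + (-1)ᵀ *ᵥ z 2 + 1ᵀ *ᵥ z 3 := Fin.sum_univ_four _
      _ = _ := by
          rw [transpose_neg, transpose_neg, hsymm, transpose_one, neg_mulVec, neg_mulVec,
            one_mulVec, one_mulVec, ← sub_eq_add_neg]
  have hinv (x : Fin N → ℝ) : A⁻¹ *ᵥ A *ᵥ x = x := by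
    rw [mulVec_mulVec, nonsing_inv_mul _ hdet, one_mulVec]
  rw [QuadraticProgram.argmin, hcon]
  change -(A⁻¹ *ᵥ _) = z 0 - z 1 + A⁻¹ *ᵥ (z 2 - z 3)
  simp only [mulVec_add, mulVec_sub, mulVec_neg, hinv]
  abel

lemma voltageProgram_residual_argmin (hA : A.PosDef) (d vmin vmax qmin qmax : Fin N → ℝ)
    (z : Fin 4 → Fin N → ℝ) :
    (voltageProgram hA d vmin vmax qmin qmax).residual
        ((voltageProgram hA d vmin vmax qmin qmax).argmin (Function.uncurry z)) =
      Function.uncurry (gradD A d vmin vmax qmin qmax z) := by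
  rw [voltageProgram_argmin, voltageProgram_residual, gradD]

lemma isProjectedAscentStep_uncurry {α β : ℝ} {g z z' : Fin 4 → Fin N → ℝ}
    (h : ∀ b i, z' b i =
      max (z b i + (if (b : ℕ) < 2 then α * g b i else β * sgn (g b i))) 0) :
    IsProjectedAscentStep α β (Function.uncurry g) (Function.uncurry z) (Function.uncurry z') := by
  rintro ⟨b, i⟩
  simp only [Function.uncurry_apply_pair, h]
  split_ifs
  exacts [Or.inl rfl, Or.inr rfl]

lemma fes_qOf_le_of_gradD_le (hv : ∀ i, vmin i ≤ vmax i) (hq : ∀ i, qmin i ≤ qmax i) (hη : 0 ≤ η)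
    {z : Fin 4 → Fin N → ℝ} (h : ∀ b i, gradD A d vmin vmax qmin qmax z b i ≤ η) :
    fes A d vmin vmax qmin qmax (qOf A z) ≤ √(2 * N) * η :=
  fes_le hv hq hη
    (fun i => ⟨sub_le_comm.1 (h 0 i), sub_le_iff_le_add'.1 (h 1 i)⟩)
    (fun i => ⟨sub_le_comm.1 (h 2 i), sub_le_iff_le_add'.1 (h 3 i)⟩)

end VoltageControl

/-- Theorem 2: under strict feasibility of the primal problem, for every ε > 0 there are
step sizes α, β > 0 and a time T such that the VC-LB iterates satisfy
fes(q(z(t))) ≤ ε for all t ≥ T. -/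
theorem stmt_11 (N : ℕ) (hN : 0 < N) (A : Matrix (Fin N) (Fin N) ℝ) (hA : A.PosDef)
    (d vmin vmax qmin qmax : Fin N → ℝ)
    (hv : ∀ i, vmin i ≤ vmax i) (hq : ∀ i, qmin i ≤ qmax i)
    (hstrict : ∃ q : Fin N → ℝ, (∀ i, qmin i < q i ∧ q i < qmax i) ∧
      ∀ i, vmin i < volt A d q i ∧ volt A d q i < vmax i) :
    ∀ ε : ℝ, 0 < ε →
      ∃ α β : ℝ, 0 < α ∧ 0 < β ∧
        ∃ T : ℕ, ∀ ziter : ℕ → Fin 4 → Fin N → ℝ,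
          ziter 0 = 0 →
          (∀ t b i, ziter (t + 1) b i =
            max (ziter t b i
              + (if (b : ℕ) < 2 then α * gradD A d vmin vmax qmin qmax (ziter t) b i
                else β * sgn (gradD A d vmin vmax qmin qmax (ziter t) b i))) 0) →
          ∀ t, T ≤ t → fes A d vmin vmax qmin qmax (qOf A (ziter t)) ≤ ε := by
  intro ε hε
  obtain ⟨q, hqs, hvs⟩ := hstrict
  have : Nonempty (Fin 4 × Fin N) := ⟨(0, ⟨0, hN⟩)⟩
  have hsqrt : 0 < √(2 * N : ℝ) := by positivity
  obtain ⟨α, hα, β, hβ, T, hT⟩ :=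
    (voltageProgram hA d vmin vmax qmin qmax).exists_eventually_residual_le
      (voltageProgram_residual_neg hA hqs hvs) (div_pos hε hsqrt)
  refine ⟨α, β, hα, hβ, T, fun ziter hz0 hstep t ht => ?_⟩
  have hres := hT (fun t => Function.uncurry (ziter t)) (by rw [hz0]; rfl)
  simp only [voltageProgram_residual_argmin] at hres
  have hgrad := hres (fun t => isProjectedAscentStep_uncurry (hstep t)) t ht
  calc fes A d vmin vmax qmin qmax (qOf A (ziter t))
      ≤ √(2 * N) * (ε / √(2 * N)) :=
        fes_qOf_le_of_gradD_le hv hq (by positivity) fun b i => hgrad (b, i)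
    _ = ε := mul_div_cancel₀ _ hsqrt.ne'

end
end

section
/- Assume strict feasibility of the primal problem. Define Z(ε) = { z ∈ ℝ₊^{4N} : V(z) ≤ ε } and F(ε) = inf{ D(z) : z ∈ Z(ε) }. Then lim_{ε → 0⁺} F(ε) = f*, where f* is the optimal value of the primal problem (which equals D* = sup{D(z) : z ∈ ℝ₊^{4N}} by strong duality). -/
open Matrix

noncomputable section

/-!
Writing `A = BᵀB` and `x = B q` turns the primal problem into finding the point of least norm in a
polyhedron `G x + c ≤ 0`. Its dual function `D` is a concave quadratic, and a Slater point `x₀` with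
slack `s` makes it coercive on the orthant: `D(z) ≤ ½‖x₀‖² - s‖z‖`. Hence `D` has a maximizer `z₀`;
the variational inequality at `z₀` says that `V(z₀) = 0` and that `z₀` closes the duality gap.
Concavity and the obtuse-angle property of the projection give
`D(z₀) - D(z) ≤ V(z) (‖z₀ - z‖ + ‖∇D(z)‖)`. The same coercivity bounds `{V ≤ ε}` for small `ε`, so
that `D(z₀) - K ε ≤ F(ε) ≤ D(z₀)`.
-/

open Filter Topology
open scoped InnerProductSpace InnerProduct

lemma tendsto_sInf_image_sublevel {α : Type*} {f r : α → ℝ} {S : Set α} {z₀ : α} {K ε₀ : ℝ}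
    (hz₀ : z₀ ∈ S) (hr : r z₀ ≤ 0) (hK : 0 ≤ K) (hε₀ : 0 < ε₀)
    (hf : ∀ z ∈ S, r z ≤ ε₀ → f z₀ - K * r z ≤ f z) :
    Tendsto (fun ε => sInf (f '' {z | z ∈ S ∧ r z ≤ ε})) (𝓝[>] 0) (𝓝 (f z₀)) := by
  have hlower : ∀ ε ≤ ε₀, f z₀ - K * ε ∈ lowerBounds (f '' {z | z ∈ S ∧ r z ≤ ε}) := by
    rintro ε hε _ ⟨z, ⟨hz, hrz⟩, rfl⟩
    linarith [hf z hz (hrz.trans hε), mul_le_mul_of_nonneg_left hrz hK]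
  have hmem : ∀ ε, 0 < ε → f z₀ ∈ f '' {z | z ∈ S ∧ r z ≤ ε} := fun ε hε =>
    Set.mem_image_of_mem f ⟨hz₀, hr.trans hε.le⟩
  have hlim : Tendsto (fun ε => f z₀ - K * ε) (𝓝[>] 0) (𝓝 (f z₀)) :=
    tendsto_nhdsWithin_of_tendsto_nhds <| Continuous.tendsto' (by fun_prop) _ _ (by simp)
  refine tendsto_of_tendsto_of_tendsto_of_le_of_le' hlim tendsto_const_nhds ?_ ?_
  · filter_upwards [Ioc_mem_nhdsGT hε₀] with ε ⟨hε, hεε₀⟩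
    exact le_csInf ⟨_, hmem ε hε⟩ (hlower ε hεε₀)
  · filter_upwards [Ioc_mem_nhdsGT hε₀] with ε ⟨hε, hεε₀⟩
    exact csInf_le ⟨_, hlower ε hεε₀⟩ (hmem ε hε)

lemma exists_pos_forall_le_neg {κ : Type*} [Finite κ] {u : κ → ℝ} (hu : ∀ i, u i < 0) :
    ∃ s > 0, ∀ i, u i ≤ -s := by
  have hev : ∀ᶠ s in 𝓝[>] (0 : ℝ), ∀ i, u i ≤ -s := by
    refine eventually_all.2 fun i => ?_
    filter_upwards [Ioc_mem_nhdsGT (neg_pos.2 (hu i))] with s hs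
    exact le_neg.1 hs.2
  obtain ⟨s, hs, hpos⟩ := (hev.and self_mem_nhdsWithin).exists
  exact ⟨s, hpos, hs⟩

lemma inner_sub_nonpos_of_isMaxOn_of_hasGradientAt {F : Type*} [NormedAddCommGroup F]
    [InnerProductSpace ℝ F] [CompleteSpace F] {f : F → ℝ} {g y z : F} {S : Set F}
    (hS : Convex ℝ S) (hmax : IsMaxOn f S z) (hf : HasGradientAt f g z) (hz : z ∈ S)
    (hy : y ∈ S) : ⟪g, y - z⟫_ℝ ≤ 0 := by
  have hcone : y - z ∈ posTangentConeAt S z :=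
    sub_mem_posTangentConeAt_of_segment_subset (hS.segment_subset hz hy)
  simpa using hmax.localize.hasFDerivWithinAt_nonpos hf.hasFDerivAt.hasFDerivWithinAt hcone

section Orthant

variable {κ : Type*}

variable (κ) in
/-- The nonnegative orthant of `ℝ^κ`, in which the dual variables live. -/
def orthant : Set (EuclideanSpace ℝ κ) := {z | ∀ i, 0 ≤ z i}

/-- The projection `⌈u⌉₊` of `u` onto the nonnegative orthant. -/
def orthantProj (u : EuclideanSpace ℝ κ) : EuclideanSpace ℝ κ :=
  WithLp.toLp 2 fun i => max (u i) 0

lemma orthantProj_mem (u : EuclideanSpace ℝ κ) : orthantProj u ∈ orthant κ :=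
  fun _ => le_max_right _ _

lemma zero_mem_orthant : (0 : EuclideanSpace ℝ κ) ∈ orthant κ := fun _ => le_rfl

lemma convex_orthant : Convex ℝ (orthant κ) := fun _ hx _ hy _ _ ha hb _ i =>
  add_nonneg (mul_nonneg ha (hx i)) (mul_nonneg hb (hy i))

lemma isClosed_orthant : IsClosed (orthant κ) := by
  simp only [orthant, Set.ofPred_forall]
  exact isClosed_iInter fun i => isClosed_le continuous_const (by fun_prop)

variable [Fintype κ]

lemma inner_sub_orthantProj_nonpos (u : EuclideanSpace ℝ κ) {y : EuclideanSpace ℝ κ}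
    (hy : y ∈ orthant κ) : ⟪u - orthantProj u, y - orthantProj u⟫_ℝ ≤ 0 := by
  rw [PiLp.inner_apply]
  refine Finset.sum_nonpos fun i _ => ?_
  have hyi : 0 ≤ y i := hy i
  change (y i - max (u i) 0) * (u i - max (u i) 0) ≤ 0
  rcases le_total (u i) 0 with hu | hu
  · simpa [hu] using mul_nonpos_of_nonneg_of_nonpos hyi hu
  · simp [hu]

lemma norm_le_sum_of_mem_orthant {z : EuclideanSpace ℝ κ} (hz : z ∈ orthant κ) :
    ‖z‖ ≤ ∑ i, z i := by
  refine le_of_sq_le_sq ?_ (Finset.sum_nonneg fun i _ => hz i)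
  rw [EuclideanSpace.real_norm_sq_eq]
  exact Finset.sum_sq_le_sq_sum_of_nonneg fun i _ => hz i

lemma inner_le_neg_mul_norm {z u : EuclideanSpace ℝ κ} {s : ℝ} (hz : z ∈ orthant κ) (hs : 0 ≤ s)
    (hu : ∀ i, u i ≤ -s) : ⟪z, u⟫_ℝ ≤ -(s * ‖z‖) :=
  calc ⟪z, u⟫_ℝ = ∑ i, u i * z i := by simp [PiLp.inner_apply]
    _ ≤ ∑ i, -s * z i := Finset.sum_le_sum fun i _ => mul_le_mul_of_nonneg_right (hu i) (hz i)
    _ = -(s * ∑ i, z i) := by rw [← Finset.mul_sum, neg_mul]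
    _ ≤ -(s * ‖z‖) := by gcongr; exact norm_le_sum_of_mem_orthant hz

/-- The natural residual `‖z - ⌈z + g⌉₊‖` of the variational inequality `⟪g, y - z⟫ ≤ 0` for all `y`
in the orthant; with `g = ∇D(z)` it is the quantity `V(z)`. -/
def naturalResidual (g z : EuclideanSpace ℝ κ) : ℝ := ‖z - orthantProj (z + g)‖

lemma naturalResidual_nonneg (g z : EuclideanSpace ℝ κ) : 0 ≤ naturalResidual g z := norm_nonneg _

lemma inner_sub_le_naturalResidual_mul (g z : EuclideanSpace ℝ κ) {y : EuclideanSpace ℝ κ}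
    (hy : y ∈ orthant κ) : ⟪g, y - z⟫_ℝ ≤ naturalResidual g z * (‖y - z‖ + ‖g‖) := by
  set w := z - orthantProj (z + g) with hw
  have hproj : ⟪g + w, (y - z) + w⟫_ℝ ≤ 0 := by
    convert inner_sub_orthantProj_nonpos (z + g) hy using 2 <;> rw [hw] <;> abel
  have hexpand : ⟪g + w, (y - z) + w⟫_ℝ = ⟪g, y - z⟫_ℝ + ⟪w, y - z⟫_ℝ + ⟪w, g⟫_ℝ + ‖w‖ ^ 2 := by
    simp only [inner_add_left, inner_add_right, real_inner_self_eq_norm_sq, real_inner_comm w g]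
    ring
  have hwy := neg_le_of_abs_le (abs_real_inner_le_norm w (y - z))
  have hwg := neg_le_of_abs_le (abs_real_inner_le_norm w g)
  change _ ≤ ‖w‖ * _
  linarith [sq_nonneg ‖w‖]

lemma naturalResidual_eq_zero {g z : EuclideanSpace ℝ κ} (hz : z ∈ orthant κ)
    (h : ∀ y ∈ orthant κ, ⟪g, y - z⟫_ℝ ≤ 0) : naturalResidual g z = 0 := by
  set w := z - orthantProj (z + g) with hw
  have hproj : ⟪g + w, w⟫_ℝ ≤ 0 := by
    convert inner_sub_orthantProj_nonpos (z + g) hz using 2; rw [hw]; abel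
  have hvar : ⟪g, -w⟫_ℝ ≤ 0 := by simpa [hw] using h _ (orthantProj_mem (z + g))
  rw [inner_add_left, real_inner_self_eq_norm_sq] at hproj
  rw [inner_neg_right] at hvar
  have hw0 : ‖w‖ ^ 2 = 0 := le_antisymm (by linarith) (sq_nonneg ‖w‖)
  exact pow_eq_zero_iff two_ne_zero |>.1 hw0

lemma nonpos_of_forall_inner_sub_nonpos {g z : EuclideanSpace ℝ κ} (hz : z ∈ orthant κ)
    (h : ∀ y ∈ orthant κ, ⟪g, y - z⟫_ℝ ≤ 0) (i : κ) : g i ≤ 0 := by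
  have hres : z - orthantProj (z + g) = 0 := norm_eq_zero.1 (naturalResidual_eq_zero hz h)
  have hi : z i = max (z i + g i) 0 := congrArg (fun u => u i) (sub_eq_zero.1 hres)
  linarith [le_max_left (z i + g i) 0]

end Orthant

section LeastNormProgram

variable {E κ : Type*} [NormedAddCommGroup E] [InnerProductSpace ℝ E] [Fintype κ]

/-- The Lagrangian of the program `min ½‖x‖²` subject to `G x + c ≤ 0`. -/
def lagrangian (G : E →L[ℝ] EuclideanSpace ℝ κ) (c : EuclideanSpace ℝ κ) (x : E)
    (z : EuclideanSpace ℝ κ) : ℝ :=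
  1 / 2 * ‖x‖ ^ 2 + ⟪z, G x + c⟫_ℝ

/-- The Lagrangian dual function of the program `min ½‖x‖²` subject to `G x + c ≤ 0`. -/
def lagrangeDual (G : E →L[ℝ] EuclideanSpace ℝ κ) (c z : EuclideanSpace ℝ κ) : ℝ :=
  ⨅ x, lagrangian G c x z

/-- The point `x` satisfies each of the constraints `G x + c ≤ 0` with slack at least `s`; a Slater
point is one with positive slack, a feasible point one with slack `0`. -/
def HasSlack (G : E →L[ℝ] EuclideanSpace ℝ κ) (c : EuclideanSpace ℝ κ) (s : ℝ) (x : E) : Prop :=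
  ∀ i, (G x + c) i ≤ -s

variable {G : E →L[ℝ] EuclideanSpace ℝ κ} {c : EuclideanSpace ℝ κ} {s : ℝ} {x₀ : E}

variable [CompleteSpace E]

/-- The minimizer `x(z)` of the Lagrangian as a function of the multiplier `z`. -/
def lagrangianMinimizer (G : E →L[ℝ] EuclideanSpace ℝ κ) : EuclideanSpace ℝ κ →L[ℝ] E :=
  -G†

/-- The gradient of the dual function, i.e. the constraint map evaluated at `x(z)`. -/
def lagrangeDualGrad (G : E →L[ℝ] EuclideanSpace ℝ κ) (c z : EuclideanSpace ℝ κ) :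
    EuclideanSpace ℝ κ :=
  G (lagrangianMinimizer G z) + c

lemma inner_lagrangianMinimizer (z : EuclideanSpace ℝ κ) (x : E) :
    ⟪lagrangianMinimizer G z, x⟫_ℝ = -⟪z, G x⟫_ℝ := by
  rw [lagrangianMinimizer, _root_.neg_apply, inner_neg_left, ContinuousLinearMap.adjoint_inner_left]

lemma lagrangian_eq_add_sq (x : E) (z : EuclideanSpace ℝ κ) :
    lagrangian G c x z = ⟪z, c⟫_ℝ - 1 / 2 * ‖lagrangianMinimizer G z‖ ^ 2
      + 1 / 2 * ‖x - lagrangianMinimizer G z‖ ^ 2 := by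
  rw [lagrangian, inner_add_right, norm_sub_sq_real, real_inner_comm _ x, inner_lagrangianMinimizer]
  ring

lemma lagrangeDual_eq (z : EuclideanSpace ℝ κ) :
    lagrangeDual G c z = ⟪z, c⟫_ℝ - 1 / 2 * ‖lagrangianMinimizer G z‖ ^ 2 := by
  have hmin : IsLeast (Set.range fun x => lagrangian G c x z)
      (⟪z, c⟫_ℝ - 1 / 2 * ‖lagrangianMinimizer G z‖ ^ 2) := by
    refine ⟨⟨lagrangianMinimizer G z, by simp [lagrangian_eq_add_sq]⟩, ?_⟩
    rintro _ ⟨x, rfl⟩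
    dsimp only
    rw [lagrangian_eq_add_sq]
    exact le_add_of_nonneg_right (by positivity)
  exact hmin.csInf_eq

lemma lagrangeDual_le_lagrangian (x : E) (z : EuclideanSpace ℝ κ) :
    lagrangeDual G c z ≤ lagrangian G c x z := by
  rw [lagrangeDual_eq, lagrangian_eq_add_sq]
  exact le_add_of_nonneg_right (by positivity)

lemma lagrangeDual_eq_lagrangian_minimizer (z : EuclideanSpace ℝ κ) :
    lagrangeDual G c z =
      1 / 2 * ‖lagrangianMinimizer G z‖ ^ 2 + ⟪z, lagrangeDualGrad G c z⟫_ℝ := by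
  simpa [lagrangeDual_eq, lagrangian, lagrangeDualGrad] using
    (lagrangian_eq_add_sq (G := G) (c := c) (lagrangianMinimizer G z) z).symm

lemma continuous_lagrangeDual : Continuous (lagrangeDual G c) := by
  rw [funext lagrangeDual_eq]
  fun_prop

lemma lagrangeDual_eq_add_inner_sub_sq (y z : EuclideanSpace ℝ κ) :
    lagrangeDual G c y = lagrangeDual G c z + ⟪lagrangeDualGrad G c z, y - z⟫_ℝ
      - 1 / 2 * ‖lagrangianMinimizer G (y - z)‖ ^ 2 := by
  have hgrad : ⟪lagrangeDualGrad G c z, y - z⟫_ℝ = ⟪y, c⟫_ℝ - ⟪z, c⟫_ℝ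
      - ⟪lagrangianMinimizer G z, lagrangianMinimizer G y - lagrangianMinimizer G z⟫_ℝ := by
    rw [← map_sub, real_inner_comm, real_inner_comm (lagrangianMinimizer G _),
      inner_lagrangianMinimizer, lagrangeDualGrad, inner_add_right, inner_sub_left y z c]
    ring
  rw [hgrad, map_sub, norm_sub_sq_real, lagrangeDual_eq, lagrangeDual_eq,
    inner_sub_right, real_inner_self_eq_norm_sq, real_inner_comm (lagrangianMinimizer G y)]
  ring

lemma lagrangeDual_le_add_inner (y z : EuclideanSpace ℝ κ) :
    lagrangeDual G c y ≤ lagrangeDual G c z + ⟪lagrangeDualGrad G c z, y - z⟫_ℝ := by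
  rw [lagrangeDual_eq_add_inner_sub_sq y z]
  exact sub_le_self _ (by positivity)

lemma hasGradientAt_lagrangeDual (z : EuclideanSpace ℝ κ) :
    HasGradientAt (lagrangeDual G c) (lagrangeDualGrad G c z) z := by
  rw [hasGradientAt_iff_isLittleO]
  have hquad : (fun y => -(1 / 2 * ‖lagrangianMinimizer G (y - z)‖ ^ 2)) =O[𝓝 z]
      fun y => ‖y - z‖ ^ 2 := by
    refine Asymptotics.IsBigO.neg_left (Asymptotics.IsBigO.const_mul_left ?_ _)
    refine Asymptotics.IsBigO.pow (Asymptotics.IsBigO.norm_norm ?_) 2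
    exact (lagrangianMinimizer G).isBigO_comp (fun y => y - z) (𝓝 z)
  have hsq : (fun y => ‖y - z‖ ^ 2) =o[𝓝 z] fun y => y - z :=
    (Asymptotics.isLittleO_norm_pow_id one_lt_two).comp_tendsto <|
      Continuous.tendsto' (by fun_prop) _ _ (by simp)
  refine (hquad.trans_isLittleO hsq).congr_left fun y => ?_
  rw [lagrangeDual_eq_add_inner_sub_sq y z]
  ring

lemma HasSlack.lagrangeDual_le (hx₀ : HasSlack G c s x₀) (hs : 0 ≤ s)
    {z : EuclideanSpace ℝ κ} (hz : z ∈ orthant κ) :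
    lagrangeDual G c z ≤ 1 / 2 * ‖x₀‖ ^ 2 - s * ‖z‖ := by
  have hle := lagrangeDual_le_lagrangian (c := c) (G := G) x₀ z
  rw [lagrangian] at hle
  linarith [inner_le_neg_mul_norm hz hs hx₀]

lemma lagrangeDual_le_of_feasible {x : E} (hx : ∀ i, (G x + c) i ≤ 0) {z : EuclideanSpace ℝ κ}
    (hz : z ∈ orthant κ) : lagrangeDual G c z ≤ 1 / 2 * ‖x‖ ^ 2 := by
  have hslack : HasSlack G c 0 x := by simpa [HasSlack] using hx
  simpa using hslack.lagrangeDual_le le_rfl hz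

lemma isLeast_image_feasible_of_isMaxOn {z : EuclideanSpace ℝ κ} (hz : z ∈ orthant κ)
    (hmax : IsMaxOn (lagrangeDual G c) (orthant κ) z) :
    IsLeast ((fun x => 1 / 2 * ‖x‖ ^ 2) '' {x | ∀ i, (G x + c) i ≤ 0}) (lagrangeDual G c z) := by
  have hvar : ∀ y ∈ orthant κ, ⟪lagrangeDualGrad G c z, y - z⟫_ℝ ≤ 0 := fun y hy =>
    inner_sub_nonpos_of_isMaxOn_of_hasGradientAt convex_orthant hmax
      (hasGradientAt_lagrangeDual z) hz hy
  have hfeas : ∀ i, (G (lagrangianMinimizer G z) + c) i ≤ 0 :=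
    nonpos_of_forall_inner_sub_nonpos hz hvar
  have hcompl : 0 ≤ ⟪z, lagrangeDualGrad G c z⟫_ℝ := by
    simpa [real_inner_comm] using hvar 0 zero_mem_orthant
  refine ⟨⟨lagrangianMinimizer G z, hfeas, ?_⟩, ?_⟩
  · refine le_antisymm ?_ (lagrangeDual_le_of_feasible hfeas hz)
    rw [lagrangeDual_eq_lagrangian_minimizer]
    exact le_add_of_nonneg_right hcompl
  · rintro _ ⟨x, hx, rfl⟩
    exact lagrangeDual_le_of_feasible hx hz

lemma HasSlack.exists_isMaxOn_lagrangeDual (hx₀ : HasSlack G c s x₀) (hs : 0 < s) :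
    ∃ z ∈ orthant κ, IsMaxOn (lagrangeDual G c) (orthant κ) z := by
  refine continuous_lagrangeDual.continuousOn.exists_isMaxOn' isClosed_orthant zero_mem_orthant ?_
  rw [eventually_inf_principal]
  filter_upwards [tendsto_norm_cocompact_atTop.eventually_ge_atTop
    ((1 / 2 * ‖x₀‖ ^ 2 - lagrangeDual G c 0) / s)] with z hnorm hz
  rw [div_le_iff₀' hs] at hnorm
  linarith [hx₀.lagrangeDual_le hs.le hz]

lemma norm_lagrangeDualGrad_le (z : EuclideanSpace ℝ κ) :
    ‖lagrangeDualGrad G c z‖ ≤ ‖G‖ * ‖lagrangianMinimizer G z‖ + ‖c‖ :=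
  (norm_add_le _ _).trans <| by gcongr; exact G.le_opNorm _

lemma HasSlack.norm_le_of_naturalResidual_le (hx₀ : HasSlack G c s x₀) (hs : 0 < s)
    {z : EuclideanSpace ℝ κ} (hz : z ∈ orthant κ)
    (hres : naturalResidual (lagrangeDualGrad G c z) z ≤ min 1 (s / 2)) :
    ‖z‖ ≤ (‖x₀‖ ^ 2 + ‖G‖ ^ 2 + 2 * ‖c‖) / s := by
  -- A residual below `s / 2` costs half of the coercivity `s * ‖z‖`; one below `1` leaves a term
  -- linear in `a`, which the quadratic part `a ^ 2 / 2` of the dual function absorbs.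
  set g := lagrangeDualGrad G c z with hg
  set a := ‖lagrangianMinimizer G z‖ with ha
  have hdual : 1 / 2 * a ^ 2 + ⟪z, g⟫_ℝ ≤ 1 / 2 * ‖x₀‖ ^ 2 - s * ‖z‖ := by
    rw [ha, hg, ← lagrangeDual_eq_lagrangian_minimizer]
    exact hx₀.lagrangeDual_le hs.le hz
  have hcompl : -⟪z, g⟫_ℝ ≤ s / 2 * ‖z‖ + (‖G‖ * a + ‖c‖) :=
    calc -⟪z, g⟫_ℝ = ⟪g, 0 - z⟫_ℝ := by simp [real_inner_comm]
      _ ≤ naturalResidual g z * (‖z‖ + ‖g‖) := by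
        simpa using inner_sub_le_naturalResidual_mul g z zero_mem_orthant
      _ = naturalResidual g z * ‖z‖ + naturalResidual g z * ‖g‖ := mul_add _ _ _
      _ ≤ s / 2 * ‖z‖ + 1 * (‖G‖ * a + ‖c‖) := by
        gcongr
        · exact hres.trans (min_le_right _ _)
        · exact hres.trans (min_le_left _ _)
        · exact norm_lagrangeDualGrad_le z
      _ = s / 2 * ‖z‖ + (‖G‖ * a + ‖c‖) := by rw [one_mul]
  rw [le_div_iff₀' hs]
  linarith [two_mul_le_add_sq ‖G‖ a]

lemma HasSlack.exists_sub_mul_naturalResidual_le (hx₀ : HasSlack G c s x₀) (hs : 0 < s)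
    {y : EuclideanSpace ℝ κ} (hy : y ∈ orthant κ) :
    ∃ K ≥ 0, ∀ z ∈ orthant κ, naturalResidual (lagrangeDualGrad G c z) z ≤ min 1 (s / 2) →
      lagrangeDual G c y - K * naturalResidual (lagrangeDualGrad G c z) z ≤
        lagrangeDual G c z := by
  set R := (‖x₀‖ ^ 2 + ‖G‖ ^ 2 + 2 * ‖c‖) / s
  refine ⟨‖y‖ + R + (‖G‖ * (‖lagrangianMinimizer G‖ * R) + ‖c‖), by positivity,
    fun z hz hres => ?_⟩
  have hzR : ‖z‖ ≤ R := hx₀.norm_le_of_naturalResidual_le hs hz hres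
  have hdist : ‖y - z‖ ≤ ‖y‖ + R := (norm_sub_le y z).trans (by gcongr)
  have hgrad : ‖lagrangeDualGrad G c z‖ ≤ ‖G‖ * (‖lagrangianMinimizer G‖ * R) + ‖c‖ :=
    (norm_lagrangeDualGrad_le z).trans <| by
      gcongr
      exact (lagrangianMinimizer G).le_opNorm_of_le hzR
  have hinner := inner_sub_le_naturalResidual_mul (lagrangeDualGrad G c z) z hy
  have hbound := mul_le_mul_of_nonneg_left (add_le_add hdist hgrad)
    (naturalResidual_nonneg (lagrangeDualGrad G c z) z)
  linarith [lagrangeDual_le_add_inner (G := G) (c := c) y z]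

end LeastNormProgram

theorem stmt_14_general {E κ : Type*} [NormedAddCommGroup E] [InnerProductSpace ℝ E]
    [CompleteSpace E] [Fintype κ] (G : E →L[ℝ] EuclideanSpace ℝ κ) (c : EuclideanSpace ℝ κ)
    (hslater : ∃ x : E, ∀ i, (G x + c) i < 0) :
    Tendsto
      (fun ε : ℝ => sInf (lagrangeDual G c ''
        {z | z ∈ orthant κ ∧ naturalResidual (lagrangeDualGrad G c z) z ≤ ε}))
      (𝓝[>] 0)
      (𝓝 (sInf ((fun x => 1 / 2 * ‖x‖ ^ 2) '' {x | ∀ i, (G x + c) i ≤ 0}))) := by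
  obtain ⟨x₀, hneg⟩ := hslater
  obtain ⟨s, hs, (hx₀ : HasSlack G c s x₀)⟩ := exists_pos_forall_le_neg hneg
  obtain ⟨z₀, hz₀, hmax⟩ := hx₀.exists_isMaxOn_lagrangeDual hs
  have hres : naturalResidual (lagrangeDualGrad G c z₀) z₀ = 0 :=
    naturalResidual_eq_zero hz₀ fun y hy =>
      inner_sub_nonpos_of_isMaxOn_of_hasGradientAt convex_orthant hmax
        (hasGradientAt_lagrangeDual z₀) hz₀ hy
  obtain ⟨K, hK, hbound⟩ := hx₀.exists_sub_mul_naturalResidual_le hs hz₀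
  rw [(isLeast_image_feasible_of_isMaxOn hz₀ hmax).csInf_eq]
  exact tendsto_sInf_image_sublevel hz₀ hres.le hK (by positivity) hbound

open scoped MatrixOrder Matrix.Norms.L2Operator in
lemma exists_linearEquiv_inner_eq_of_posDef {n : Type*} [Fintype n] {A : Matrix n n ℝ}
    (hA : A.PosDef) :
    ∃ L : (n → ℝ) ≃ₗ[ℝ] EuclideanSpace ℝ n, ∀ p q, ⟪L p, L q⟫_ℝ = p ⬝ᵥ A *ᵥ q := by
  classical
  obtain ⟨B, hB, rfl⟩ :=
    CStarAlgebra.isStrictlyPositive_iff_eq_star_mul_self.1 hA.isStrictlyPositive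
  refine ⟨B.toLinearEquiv' (B.invertibleOfIsUnitDet ?_) ≪≫ₗ (WithLp.linearEquiv 2 ℝ (n → ℝ)).symm,
    fun p q => ?_⟩
  · exact (B.isUnit_iff_isUnit_det).1 hB
  · change ⟪WithLp.toLp 2 (B *ᵥ p), WithLp.toLp 2 (B *ᵥ q)⟫_ℝ = _
    rw [EuclideanSpace.inner_toLp_toLp, star_trivial, ← mulVec_mulVec, star_eq_conjTranspose,
      conjTranspose_eq_transpose_of_trivial, mulVec_transpose, dotProduct_comm p,
      ← dotProduct_mulVec]

section BoxConstraints

variable {N : ℕ}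

/-- The identification of four blocks of `ℝ^N`, as used for the dual variables, with the Euclidean
space of dimension `4N`. -/
def flatten : (Fin 4 → Fin N → ℝ) ≃ₗ[ℝ] EuclideanSpace ℝ (Fin 4 × Fin N) :=
  (LinearEquiv.curry ℝ ℝ (Fin 4) (Fin N)).symm ≪≫ₗ (WithLp.linearEquiv 2 ℝ _).symm

lemma flatten_apply (w : Fin 4 → Fin N → ℝ) (b : Fin 4) (i : Fin N) : flatten w (b, i) = w b i :=
  rfl

lemma norm_flatten (w : Fin 4 → Fin N → ℝ) : ‖flatten w‖ = enorm4 w := by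
  simp only [EuclideanSpace.norm_eq, Real.norm_eq_abs, sq_abs, Fintype.sum_prod_type,
    flatten_apply, enorm4]

lemma inner_flatten (z w : Fin 4 → Fin N → ℝ) :
    ⟪flatten z, flatten w⟫_ℝ = z 0 ⬝ᵥ w 0 + z 1 ⬝ᵥ w 1 + z 2 ⬝ᵥ w 2 + z 3 ⬝ᵥ w 3 := by
  simp only [PiLp.inner_apply, Fintype.sum_prod_type, Fin.sum_univ_four, flatten_apply,
    RCLike.inner_apply', conj_trivial, dotProduct]

lemma flatten_mem_orthant {z : Fin 4 → Fin N → ℝ} :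
    flatten z ∈ orthant (Fin 4 × Fin N) ↔ ∀ b i, 0 ≤ z b i :=
  Prod.forall

variable {A : Matrix (Fin N) (Fin N) ℝ} {d vmin vmax qmin qmax : Fin N → ℝ}
  {L : (Fin N → ℝ) ≃ₗ[ℝ] EuclideanSpace ℝ (Fin N)}

/-- The left-hand sides of the voltage and injection limits, written as constraints `≤ 0`. -/
def boxConstraint (A : Matrix (Fin N) (Fin N) ℝ) (d vmin vmax qmin qmax q : Fin N → ℝ) :
    Fin 4 → Fin N → ℝ :=
  ![vmin - volt A d q, volt A d q - vmax, qmin - q, q - qmax]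

/-- The linear part of `boxConstraint`, in coordinates `x = L q`, where `L` will carry the inner
product `pᵀAq` to the Euclidean one. -/
def boxConstraintLinear (A : Matrix (Fin N) (Fin N) ℝ)
    (L : (Fin N → ℝ) ≃ₗ[ℝ] EuclideanSpace ℝ (Fin N)) :
    EuclideanSpace ℝ (Fin N) →L[ℝ] EuclideanSpace ℝ (Fin 4 × Fin N) :=
  (flatten.toLinearMap ∘ₗ LinearMap.pi ![-A.mulVecLin, A.mulVecLin, -LinearMap.id, LinearMap.id] ∘ₗ
    L.symm.toLinearMap).toContinuousLinearMap

/-- The value at `q = 0` of the affine map `boxConstraint`, as a point of the Euclidean space. -/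
def boxConstraintOffset (d vmin vmax qmin qmax : Fin N → ℝ) : EuclideanSpace ℝ (Fin 4 × Fin N) :=
  flatten ![vmin - d, d - vmax, qmin, -qmax]

lemma boxConstraintLinear_apply (q : Fin N → ℝ) :
    boxConstraintLinear A L (L q) = flatten ![-(A *ᵥ q), A *ᵥ q, -q, q] := by
  simp only [boxConstraintLinear, LinearMap.coe_toContinuousLinearMap', LinearMap.comp_apply,
    LinearEquiv.coe_coe, LinearEquiv.symm_apply_apply]
  congr 1
  ext b
  fin_cases b <;> rfl

lemma boxConstraintLinear_add (q : Fin N → ℝ) :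
    boxConstraintLinear A L (L q) + boxConstraintOffset d vmin vmax qmin qmax =
      flatten (boxConstraint A d vmin vmax qmin qmax q) := by
  rw [boxConstraintLinear_apply, boxConstraintOffset, ← map_add]
  congr 1
  ext b i
  fin_cases b <;> simp [boxConstraint, volt] <;> ring

lemma boxConstraint_nonpos_iff {q : Fin N → ℝ} :
    (∀ j, flatten (boxConstraint A d vmin vmax qmin qmax q) j ≤ 0) ↔
      (∀ i, qmin i ≤ q i ∧ q i ≤ qmax i) ∧
        ∀ i, vmin i ≤ volt A d q i ∧ volt A d q i ≤ vmax i := by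
  simp only [boxConstraint, Prod.forall, flatten_apply, cons_val', Pi.sub_apply, cons_val_fin_one,
    Fin.forall_fin_succ, cons_val_zero, sub_nonpos, cons_val_succ, forall_const, forall_and]
  tauto

lemma boxConstraint_neg_iff {q : Fin N → ℝ} :
    (∀ j, flatten (boxConstraint A d vmin vmax qmin qmax q) j < 0) ↔
      (∀ i, qmin i < q i ∧ q i < qmax i) ∧
        ∀ i, vmin i < volt A d q i ∧ volt A d q i < vmax i := by
  simp only [boxConstraint, Prod.forall, flatten_apply, cons_val', Pi.sub_apply, cons_val_fin_one,
    Fin.forall_fin_succ, cons_val_zero, sub_neg, cons_val_succ, forall_const, forall_and]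
  tauto

lemma half_norm_sq_eq (hL : ∀ p q, ⟪L p, L q⟫_ℝ = p ⬝ᵥ A *ᵥ q) (q : Fin N → ℝ) :
    1 / 2 * ‖L q‖ ^ 2 = 1 / 2 * (q ⬝ᵥ A *ᵥ q) := by
  rw [← real_inner_self_eq_norm_sq, hL]

lemma lagrangeDual_flatten (hL : ∀ p q, ⟪L p, L q⟫_ℝ = p ⬝ᵥ A *ᵥ q) (z : Fin 4 → Fin N → ℝ) :
    lagrangeDual (boxConstraintLinear A L) (boxConstraintOffset d vmin vmax qmin qmax)
      (flatten z) = dualFun A d vmin vmax qmin qmax z := by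
  rw [lagrangeDual, dualFun]
  refine (L.surjective.iInf_congr L fun q => ?_).symm
  rw [lagrangian, boxConstraintLinear_add, inner_flatten, half_norm_sq_eq hL]
  simp only [boxConstraint, add_assoc]
  rfl

lemma lagrangianMinimizer_flatten (hA : IsUnit A.det) (hL : ∀ p q, ⟪L p, L q⟫_ℝ = p ⬝ᵥ A *ᵥ q)
    (z : Fin 4 → Fin N → ℝ) :
    lagrangianMinimizer (boxConstraintLinear A L) (flatten z) = L (qOf A z) := by
  refine ext_inner_right ℝ fun x => ?_
  obtain ⟨q, rfl⟩ := L.surjective x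
  have hsymm (p : Fin N → ℝ) : A *ᵥ p ⬝ᵥ q = p ⬝ᵥ A *ᵥ q := by
    rw [dotProduct_comm, ← hL, real_inner_comm, hL]
  have hinv : A *ᵥ (A⁻¹ *ᵥ (z 2 - z 3)) = z 2 - z 3 := by
    rw [mulVec_mulVec, A.mul_nonsing_inv hA, one_mulVec]
  rw [inner_lagrangianMinimizer, hL, boxConstraintLinear_apply, inner_flatten, ← hsymm, qOf,
    mulVec_add, hinv, add_dotProduct, hsymm]
  simp only [sub_dotProduct, dotProduct_neg, cons_val]
  ring

lemma naturalResidual_flatten (hA : IsUnit A.det) (hL : ∀ p q, ⟪L p, L q⟫_ℝ = p ⬝ᵥ A *ᵥ q)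
    (z : Fin 4 → Fin N → ℝ) :
    naturalResidual (lagrangeDualGrad (boxConstraintLinear A L)
      (boxConstraintOffset d vmin vmax qmin qmax) (flatten z)) (flatten z) =
      Vfun A d vmin vmax qmin qmax z := by
  rw [lagrangeDualGrad, lagrangianMinimizer_flatten hA hL, boxConstraintLinear_add,
    Vfun, ← norm_flatten]
  rfl

lemma image_half_norm_sq_feasible (hL : ∀ p q, ⟪L p, L q⟫_ℝ = p ⬝ᵥ A *ᵥ q) :
    (fun x => 1 / 2 * ‖x‖ ^ 2) ''
        {x | ∀ j, (boxConstraintLinear A L x + boxConstraintOffset d vmin vmax qmin qmax) j ≤ 0} =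
      (fun q => 1 / 2 * (q ⬝ᵥ A *ᵥ q)) ''
        {q | (∀ i, qmin i ≤ q i ∧ q i ≤ qmax i) ∧
          ∀ i, vmin i ≤ volt A d q i ∧ volt A d q i ≤ vmax i} := by
  rw [← Set.image_preimage_eq {x | ∀ j, (boxConstraintLinear A L x + _) j ≤ 0} L.surjective,
    Set.image_image]
  simp only [Set.preimage_ofPred_eq, boxConstraintLinear_add, boxConstraint_nonpos_iff,
    half_norm_sq_eq hL]

lemma image_lagrangeDual_naturalResidual_le (hA : IsUnit A.det)
    (hL : ∀ p q, ⟪L p, L q⟫_ℝ = p ⬝ᵥ A *ᵥ q) (ε : ℝ) :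
    lagrangeDual (boxConstraintLinear A L) (boxConstraintOffset d vmin vmax qmin qmax) ''
        {z | z ∈ orthant (Fin 4 × Fin N) ∧ naturalResidual (lagrangeDualGrad
          (boxConstraintLinear A L) (boxConstraintOffset d vmin vmax qmin qmax) z) z ≤ ε} =
      dualFun A d vmin vmax qmin qmax ''
        {z | (∀ b i, 0 ≤ z b i) ∧ Vfun A d vmin vmax qmin qmax z ≤ ε} := by
  rw [← Set.image_preimage_eq {z | z ∈ orthant _ ∧ naturalResidual _ z ≤ ε} flatten.surjective,
    Set.image_image]
  simp only [Set.preimage_ofPred_eq, lagrangeDual_flatten hL, flatten_mem_orthant,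
    naturalResidual_flatten hA hL]

end BoxConstraints

/-- Proposition 4(b): under strict feasibility, F(ε) = inf{D(z) : z ∈ ℝ₊^{4N}, V(z) ≤ ε}
tends, as ε → 0⁺, to the optimal value f* of the primal problem. -/
theorem stmt_14 (N : ℕ) (hN : 0 < N) (A : Matrix (Fin N) (Fin N) ℝ) (hA : A.PosDef)
    (d vmin vmax qmin qmax : Fin N → ℝ)
    (hv : ∀ i, vmin i ≤ vmax i) (hq : ∀ i, qmin i ≤ qmax i)
    (hstrict : ∃ q : Fin N → ℝ, (∀ i, qmin i < q i ∧ q i < qmax i) ∧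
      ∀ i, vmin i < volt A d q i ∧ volt A d q i < vmax i) :
    Filter.Tendsto
      (fun ε : ℝ => sInf (dualFun A d vmin vmax qmin qmax ''
        {z : Fin 4 → Fin N → ℝ | (∀ b i, 0 ≤ z b i) ∧
          Vfun A d vmin vmax qmin qmax z ≤ ε}))
      (nhdsWithin 0 (Set.Ioi 0))
      (nhds (sInf ((fun q : Fin N → ℝ => (1 / 2) * (q ⬝ᵥ A *ᵥ q)) ''
        {q : Fin N → ℝ | (∀ i, qmin i ≤ q i ∧ q i ≤ qmax i) ∧
          ∀ i, vmin i ≤ volt A d q i ∧ volt A d q i ≤ vmax i}))) := by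
  obtain ⟨L, hL⟩ := exists_linearEquiv_inner_eq_of_posDef hA
  obtain ⟨q₀, hq₀⟩ := hstrict
  have hslater : ∃ x, ∀ j,
      (boxConstraintLinear A L x + boxConstraintOffset d vmin vmax qmin qmax) j < 0 :=
    ⟨L q₀, by rwa [boxConstraintLinear_add, boxConstraint_neg_iff]⟩
  have hdet : IsUnit A.det := hA.det_pos.ne'.isUnit
  simpa only [image_half_norm_sq_feasible hL, image_lagrangeDual_naturalResidual_le hdet hL]
    using stmt_14_general _ _ hslater

end
end

section
/- Let (z^k)_{k∈ℕ} be a sequence in ℝ₊^{4N} with lim_{k→∞} V(z^k) = 0, and let i ∈ {1,…,4N} be an index such that lim_{k→∞} z^k_i = 0. Then limsup_{k→∞} ∇_i D(z^k) ≤ 0. -/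
open Matrix

noncomputable section

/-!
The `i`-th coordinate of the residual `z - ⌈z + ∇D(z)⌉₊` is at most `-∇_i D(z)`, so `∇_i D ≤ V` at
every point. The two gradient components attached to the lower and upper bound of the same quantity
have a constant sum, so this also bounds each `∇_i D` below by a constant minus `V`. Hence a
sequence with `V → 0` has bounded gradient components, their real limsup is a genuine one, and
comparison with `V` makes it nonpositive.
-/

theorem le_abs_sub_max_add {α : Type*} [AddCommGroup α] [LinearOrder α] [IsOrderedAddMonoid α]
    (x y c : α) : y ≤ |x - max (x + y) c| :=
  calc
    y = x + y - x := (add_sub_cancel_left x y).symm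
    _ ≤ max (x + y) c - x := sub_le_sub_right (le_max_left _ _) x
    _ ≤ |max (x + y) c - x| := le_abs_self _
    _ = |x - max (x + y) c| := abs_sub_comm _ _

section DualGradient

open Filter Topology

variable {N : ℕ}

theorem enorm4_eq_norm (w : Fin 4 → Fin N → ℝ) :
    enorm4 w = ‖WithLp.toLp 2 fun p : Fin 4 × Fin N => w p.1 p.2‖ := by
  simp [enorm4, EuclideanSpace.norm_eq, Fintype.sum_prod_type]

theorem abs_apply_le_enorm4 (w : Fin 4 → Fin N → ℝ) (b : Fin 4) (i : Fin N) :
    |w b i| ≤ enorm4 w := by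
  rw [enorm4_eq_norm]
  exact PiLp.norm_apply_le (WithLp.toLp 2 fun p : Fin 4 × Fin N => w p.1 p.2) (b, i)

variable (A : Matrix (Fin N) (Fin N) ℝ) (d vmin vmax qmin qmax : Fin N → ℝ)

theorem gradD_le_Vfun (z : Fin 4 → Fin N → ℝ) (b : Fin 4) (i : Fin N) :
    gradD A d vmin vmax qmin qmax z b i ≤ Vfun A d vmin vmax qmin qmax z :=
  calc
    gradD A d vmin vmax qmin qmax z b i
      ≤ |z b i - max (z b i + gradD A d vmin vmax qmin qmax z b i) 0| := le_abs_sub_max_add _ _ _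
    _ ≤ Vfun A d vmin vmax qmin qmax z :=
        abs_apply_le_enorm4
          (fun b i => z b i - max (z b i + gradD A d vmin vmax qmin qmax z b i) 0) b i

theorem exists_gradD_add_gradD_eq_const (b : Fin 4) (i : Fin N) :
    ∃ (b' : Fin 4) (c : ℝ), ∀ z : Fin 4 → Fin N → ℝ,
      gradD A d vmin vmax qmin qmax z b i + gradD A d vmin vmax qmin qmax z b' i = c := by
  fin_cases b
  · exact ⟨1, vmin i - vmax i, fun z => by simp [gradD]⟩
  · exact ⟨0, vmin i - vmax i, fun z => by simp [gradD]⟩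
  · exact ⟨3, qmin i - qmax i, fun z => by simp [gradD]⟩
  · exact ⟨2, qmin i - qmax i, fun z => by simp [gradD]⟩

theorem exists_sub_Vfun_le_gradD (b : Fin 4) (i : Fin N) :
    ∃ c : ℝ, ∀ z : Fin 4 → Fin N → ℝ,
      c - Vfun A d vmin vmax qmin qmax z ≤ gradD A d vmin vmax qmin qmax z b i := by
  obtain ⟨b', c, hsum⟩ := exists_gradD_add_gradD_eq_const A d vmin vmax qmin qmax b i
  refine ⟨c, fun z => ?_⟩
  linarith [hsum z, gradD_le_Vfun A d vmin vmax qmin qmax z b' i]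

theorem isBoundedUnder_ge_gradD {ι : Type*} {l : Filter ι} {z : ι → Fin 4 → Fin N → ℝ}
    (hV : l.IsBoundedUnder (· ≤ ·) fun k => Vfun A d vmin vmax qmin qmax (z k))
    (b : Fin 4) (i : Fin N) :
    l.IsBoundedUnder (· ≥ ·) fun k => gradD A d vmin vmax qmin qmax (z k) b i := by
  obtain ⟨c, hc⟩ := exists_sub_Vfun_le_gradD A d vmin vmax qmin qmax b i
  obtain ⟨M, hM⟩ := hV.eventually_le
  exact isBoundedUnder_of_eventually_ge (a := c - M) <|
    hM.mono fun k hk => (sub_le_sub_left hk c).trans (hc (z k))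

theorem stmt_18_general {ι : Type*} {l : Filter ι} [l.NeBot] {z : ι → Fin 4 → Fin N → ℝ}
    (hV : Tendsto (fun k => Vfun A d vmin vmax qmin qmax (z k)) l (𝓝 0))
    (b : Fin 4) (i : Fin N) :
    limsup (fun k => gradD A d vmin vmax qmin qmax (z k) b i) l ≤ 0 := by
  have hbelow := isBoundedUnder_ge_gradD A d vmin vmax qmin qmax hV.isBoundedUnder_le b i
  calc
    limsup (fun k => gradD A d vmin vmax qmin qmax (z k) b i) l
      ≤ limsup (fun k => Vfun A d vmin vmax qmin qmax (z k)) l :=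
        limsup_le_limsup
          (.of_forall fun k => gradD_le_Vfun A d vmin vmax qmin qmax (z k) b i)
          hbelow.isCoboundedUnder_le hV.isBoundedUnder_le
    _ = 0 := hV.limsup_eq

end DualGradient

/-- Claim 1: if (z^k) ⊆ ℝ₊^{4N} with V(z^k) → 0, and the i-th coordinate (here the
coordinate (b, i) of the four-block representation) satisfies z^k_i → 0, then
limsup_k ∇_i D(z^k) ≤ 0. -/
theorem stmt_18 (N : ℕ) (hN : 0 < N) (A : Matrix (Fin N) (Fin N) ℝ) (hA : A.PosDef)
    (d vmin vmax qmin qmax : Fin N → ℝ)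
    (hv : ∀ i, vmin i ≤ vmax i) (hq : ∀ i, qmin i ≤ qmax i)
    (zk : ℕ → Fin 4 → Fin N → ℝ) (hzk : ∀ k b i, 0 ≤ zk k b i)
    (hV : Filter.Tendsto (fun k => Vfun A d vmin vmax qmin qmax (zk k))
      Filter.atTop (nhds 0))
    (b : Fin 4) (i : Fin N)
    (hi : Filter.Tendsto (fun k => zk k b i) Filter.atTop (nhds 0)) :
    Filter.limsup (fun k => gradD A d vmin vmax qmin qmax (zk k) b i) Filter.atTop
      ≤ 0 := by
  exact stmt_18_general A d vmin vmax qmin qmax hV b i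

end
end

section
/- Let (z^k)_{k∈ℕ} be a sequence in ℝ₊^{4N} with lim_{k→∞} V(z^k) = 0, let W > 0, and let i ∈ {1,…,4N} be an index such that z^k_i ≥ W for all k ∈ ℕ. Then lim_{k→∞} ∇_i D(z^k) = 0. -/
open Matrix

noncomputable section

/-!
Componentwise, `x - (x + g)⁺ = min (-g) x`. Once this residual is below a lower bound `W > 0`
of `x`, the minimum can only be attained by `-g`, so the residual is exactly `-g`.
-/

open Filter Topology

lemma sub_posPart_add_eq_neg_inf {G : Type*} [Lattice G] [AddCommGroup G] [AddLeftMono G]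
    (x g : G) : x - (x + g)⁺ = -g ⊓ x := by
  rw [posPart_def, sub_sup, sub_add_cancel_left, sub_zero]

lemma tendsto_of_tendsto_min_of_eventually_le {α β : Type*} [LinearOrder β] [TopologicalSpace β]
    [ClosedIciTopology β] {l : Filter α} {f g : α → β} {b c : β}
    (h : Tendsto (fun a => min (f a) (g a)) l (𝓝 b)) (hbc : b < c) (hg : ∀ᶠ a in l, c ≤ g a) :
    Tendsto f l (𝓝 b) := by
  refine h.congr' ?_
  filter_upwards [h.eventually_lt_const hbc, hg] with a hlt hle
  have hfc : f a < c := (min_lt_iff.mp hlt).resolve_right hle.not_gt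
  exact min_eq_left (hfc.le.trans hle)

lemma enorm4_eq_norm_toLp_uncurry {N : ℕ} (w : Fin 4 → Fin N → ℝ) :
    enorm4 w = ‖WithLp.toLp 2 (Function.uncurry w)‖ := by
  simp [enorm4, EuclideanSpace.norm_eq, Fintype.sum_prod_type]

theorem stmt_19_general {α ι : Type*} [Fintype ι] {p : ENNReal} [Fact (1 ≤ p)] {l : Filter α}
    {z g : α → ι → ℝ} (hV : Tendsto (fun a => ‖WithLp.toLp p (z a - (z a + g a)⁺)‖) l (𝓝 0))
    {W : ℝ} (hW : 0 < W) {i : ι} (hi : ∀ᶠ a in l, W ≤ z a i) :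
    Tendsto (fun a => g a i) l (𝓝 0) := by
  have hle (a : α) : ‖min (-g a i) (z a i)‖ ≤ ‖WithLp.toLp p (z a - (z a + g a)⁺)‖ := by
    rw [sub_posPart_add_eq_neg_inf]
    exact PiLp.norm_apply_le (WithLp.toLp p (-g a ⊓ z a)) i
  have hmin : Tendsto (fun a => min (-g a i) (z a i)) l (𝓝 0) := squeeze_zero_norm hle hV
  simpa using (tendsto_of_tendsto_min_of_eventually_le hmin hW hi).neg

/-- Claim 2: if (z^k) ⊆ ℝ₊^{4N} with V(z^k) → 0, W > 0, and the i-th coordinate (here the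
coordinate (b, i) of the four-block representation) satisfies z^k_i ≥ W for all k, then
∇_i D(z^k) → 0. -/
theorem stmt_19 (N : ℕ) (hN : 0 < N) (A : Matrix (Fin N) (Fin N) ℝ) (hA : A.PosDef)
    (d vmin vmax qmin qmax : Fin N → ℝ)
    (hv : ∀ i, vmin i ≤ vmax i) (hq : ∀ i, qmin i ≤ qmax i)
    (zk : ℕ → Fin 4 → Fin N → ℝ) (hzk : ∀ k b i, 0 ≤ zk k b i)
    (hV : Filter.Tendsto (fun k => Vfun A d vmin vmax qmin qmax (zk k))
      Filter.atTop (nhds 0))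
    (W : ℝ) (hW : 0 < W)
    (b : Fin 4) (i : Fin N) (hi : ∀ k, W ≤ zk k b i) :
    Filter.Tendsto (fun k => gradD A d vmin vmax qmin qmax (zk k) b i)
      Filter.atTop (nhds 0) := by
  simp only [Vfun, enorm4_eq_norm_toLp_uncurry] at hV
  exact stmt_19_general (i := (b, i)) (z := fun k => Function.uncurry (zk k))
    (g := fun k => Function.uncurry (gradD A d vmin vmax qmin qmax (zk k))) hV hW (.of_forall hi)

end
end
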